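/- Let 𝔽_q be a finite field of odd order q, let T be a tree with k ≥ 1 edges and v a vertex of T. Let E, F ⊆ 𝔽_q² with |E| = |F| ≥ 4·2^{16k}·q^{4/3}. Then there exist a constant c = c(k) > 0 (independent of E, F, q) and a subset E′ ⊆ E with |E′| ≥ |E|/2^{8k} such that for every x ∈ E′ the number of distinct trees (T′, x) that are isomorphic to (T, v) and have all vertices other than x in F is at least c·q^k. -/

import Mathlib

/-!
Let `N = |E| = |F|`, so that `N ≥ 16 q^{4/3}`. It suffices to find `H ⊆ F` with `2|H| ≥ N` such that
every point of `H`, and at least half of the points of `E`, see at least `q / 5000` distances to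
points of `H`: the vertices of the tree are then placed one after the other, moving away from the
root, with at least `q / 5000` distinct edge lengths to choose from at each step
(`pow_le_treeCount`).

Call a point rich for `A` if it sees that many distances to `A`. For `A ⊆ F` with `2|A| ≥ N`, few
points of `E ∪ F` are not rich (`bad_card_le`); in particular, the points of `F` rich for `A`
number at least `N / 2` again. Passing from `F` to its rich points repeatedly, one descends, by
monotonicity, to a set `H` all of whose points are rich for `H`. That few points are not rich
follows by Cauchy-Schwarz from the bound `O(N³ / q)` for the number of isosceles triangles `(a, b,
c)`, `‖a - b‖ = ‖a - c‖`, `‖b - c‖ ≠ 0`, in a set of size of order `N ≥ q^{4/3}` (`sum_tripS_le`).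

An isosceles triangle is an incidence of the apex `a` with the axis of the reflection that swaps
`b` and `c`. Let `f(g)` and `m(g)` be the numbers of points of the set that lie on the axis of the
reflection `g`, and that `g` moves inside the set. The triangle count is `∑ f(g) m(g)`, and the
squared deviations of `f(g)` from `N / q` add up to at most `4 q N` (`sum_fixd_var`), so that all
depends on the bisector energy `∑ m(g)²` (`sum_moved_sq`). It counts pairs of segments of the same
length that a common reflection carries to each other. For a fixed non-zero length, the segments
and reflections behave like a pseudo-random graph, because an orientation preserving isometry is a
product of two reflections in about `q` ways (`common_card`, `sum_hits_segs`). The sum over the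
lengths of the squares of the numbers of segments is at most `N` times the number of isosceles
triangles, and the two estimates bound the triangle count by its own square root (`bootstrap`).
-/

/-- The "distance" between two points of `F × F`:
`‖x - y‖ = (x₁ - y₁)² + (x₂ - y₂)²`. -/
def fdist {F : Type*} [CommRing F] (x y : F × F) : F :=
  (x.1 - y.1) ^ 2 + (x.2 - y.2) ^ 2

/-- The edge-length function of an embedding `φ` of vertices, as a function on `Sym2 V`. -/
def edgeLengths {F : Type*} [CommRing F] {V : Type*} (φ : V → F × F) : Sym2 V → F :=
  Sym2.lift ⟨fun a b => fdist (φ a) (φ b), fun a b => by simp only [fdist]; ring⟩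

/-- The number of distinct trees `(T', x)` with vertices (other than `x`) in `A` which are
isomorphic to `(G, v)`: the number of distinct edge-length vectors, indexed by the edges of `G`,
coming from maps `φ : V → F × F` with `φ v = x` and `φ u ∈ A` for all `u ≠ v`. -/
noncomputable def treeCount {F : Type*} [CommRing F] {V : Type*} (G : SimpleGraph V) (v : V)
    (x : F × F) (A : Set (F × F)) : ℕ :=
  Set.ncard { f : G.edgeSet → F |
    ∃ φ : V → F × F, φ v = x ∧ (∀ u, u ≠ v → φ u ∈ A) ∧ f = fun e => edgeLengths φ e.1 }

/-- The pinned nonzero distance set `Δ*_x(E)`. -/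
def pinnedDist {F : Type*} [CommRing F] (x : F × F) (E : Set (F × F)) : Set F :=
  {d | d ≠ 0 ∧ ∃ y ∈ E, fdist x y = d}

/-- The number of triples `(a, b, c) ∈ A × B × C` with `‖a-b‖ = ‖a-c‖` and `‖b-c‖ ≠ 0`. -/
noncomputable def tripleCount {F : Type*} [CommRing F] (A B C : Set (F × F)) : ℕ :=
  Set.ncard {t : (F × F) × (F × F) × (F × F) |
    t.1 ∈ A ∧ t.2.1 ∈ B ∧ t.2.2 ∈ C ∧
    fdist t.1 t.2.1 = fdist t.1 t.2.2 ∧ fdist t.2.1 t.2.2 ≠ 0}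

/-- `ℓ` is an isotropic line: a line all of whose pairs of points are at distance `0`. -/
def IsIsotropicLine {F : Type*} [CommRing F] (ℓ : Set (F × F)) : Prop :=
  (∃ a d : F × F, d ≠ 0 ∧ ℓ = {z | ∃ t : F, z = a + t • d}) ∧
    ∀ x ∈ ℓ, ∀ y ∈ ℓ, fdist x y = 0

/-- The perpendicular bisector of `a` and `b`. -/
def bisector {F : Type*} [CommRing F] (a b : F × F) : Set (F × F) :=
  {z | fdist z a = fdist z b}

/-- The bisector energy `Q(E)`. -/
noncomputable def bisectorEnergy {F : Type*} [CommRing F] (E : Set (F × F)) : ℕ :=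
  Set.ncard {q : (F × F) × (F × F) × (F × F) × (F × F) |
    q.1 ∈ E ∧ q.2.1 ∈ E ∧ q.2.2.1 ∈ E ∧ q.2.2.2 ∈ E ∧
    fdist q.1 q.2.1 ≠ 0 ∧ fdist q.2.2.1 q.2.2.2 ≠ 0 ∧
    bisector q.1 q.2.1 = bisector q.2.2.1 q.2.2.2}

/-! ### Reflections of the plane -/

namespace TreeDist

open Finset
open scoped Classical

section Geometry

variable {K : Type} [Field K]

/-- The affine map `z ↦ w z̄ + u` of the plane, where `K × K` is read as `K[i]`. -/
def act (g : Σ _ : K × K, K × K) (z : K × K) : K × K :=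
  (g.1.1 * z.1 + g.1.2 * z.2 + g.2.1, g.1.2 * z.1 - g.1.1 * z.2 + g.2.2)

/-- The condition `u + w ū = 0`: together with `w w̄ = 1` it says that `z ↦ w z̄ + u` is an
involution, i.e. the reflection in a non-isotropic line. -/
def InKer (w u : K × K) : Prop :=
  (1 + w.1) * u.1 + w.2 * u.2 = 0 ∧ w.2 * u.1 + (1 - w.1) * u.2 = 0

/-- A vector `d` with `w d̄ = s d`, `s ≠ 0`, is zero or non-isotropic. -/
lemma nonisotropic_of_eigen (h2 : (2 : K) ≠ 0) {w d : K × K} {s : K} (hs : s ≠ 0)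
    (h1 : w.1 * d.1 + w.2 * d.2 = s * d.1) (h3 : w.2 * d.1 - w.1 * d.2 = s * d.2) (hd : d ≠ 0) :
    d.1 ^ 2 + d.2 ^ 2 ≠ 0 := by
  intro h0
  have e1 : 2 * s * d.1 ^ 2 = 0 := by
    linear_combination (s + w.1) * h0 - d.1 * h1 + d.2 * h3
  have e2 : d.1 = 0 := by simpa [h2, hs] using e1
  have e3 : d.2 = 0 := by simpa [e2] using h0
  exact hd (Prod.ext e2 e3)

/-- The equation `w d̄ = e` determines `w` when `d` is non-isotropic. -/
lemma w_unique {w w' d : K × K} (hd : d.1 ^ 2 + d.2 ^ 2 ≠ 0)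
    (h1 : w.1 * d.1 + w.2 * d.2 = w'.1 * d.1 + w'.2 * d.2)
    (h3 : w.2 * d.1 - w.1 * d.2 = w'.2 * d.1 - w'.1 * d.2) : w = w' := by
  ext
  · apply mul_right_cancel₀ hd; linear_combination d.1 * h1 - d.2 * h3
  · apply mul_right_cancel₀ hd; linear_combination d.2 * h1 + d.1 * h3

/-- A non-zero `u` satisfies `u + w ū = 0` for at most one `w`. -/
lemma inKer_unique (h2 : (2 : K) ≠ 0) {w w' u : K × K} (h : InKer w u) (h' : InKer w' u)
    (hu : u ≠ 0) : w = w' := by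
  obtain ⟨a, b⟩ := h
  obtain ⟨a', b'⟩ := h'
  refine w_unique (nonisotropic_of_eigen h2 (w := w) (s := -1) (by simp) ?_ ?_ hu) ?_ ?_
  · linear_combination a
  · linear_combination b
  · linear_combination a - a'
  · linear_combination b - b'

/-- If `b` and `c` lie on the same circle of non-zero radius about `a`, they are equal or at
non-zero distance. -/
lemma eq_of_fdist_eq_zero {a b c : K × K} (h : fdist a b = fdist a c)
    (h0 : fdist a b ≠ 0) (hbc : fdist b c = 0) (h2 : (2 : K) ≠ 0) : b = c := by
  simp only [fdist] at h h0 hbc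
  -- the determinant of `b - a` and `c - a` vanishes
  have hX : (a.1 - b.1) * (a.2 - c.2) - (a.2 - b.2) * (a.1 - c.1) = 0 := by
    have : (2 * ((a.1 - b.1) * (a.2 - c.2) - (a.2 - b.2) * (a.1 - c.1))) ^ 2 = 0 := by
      have e : 2 * ((a.1 - b.1) * (a.1 - c.1) + (a.2 - b.2) * (a.2 - c.2))
          = 2 * ((a.1 - b.1) ^ 2 + (a.2 - b.2) ^ 2) := by linear_combination -hbc - h
      linear_combination -(2 * ((a.1 - b.1) * (a.1 - c.1) + (a.2 - b.2) * (a.2 - c.2))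
        + 2 * ((a.1 - b.1) ^ 2 + (a.2 - b.2) ^ 2)) * e - 4 * ((a.1 - b.1) ^ 2 + (a.2 - b.2) ^ 2) * h
    simpa [h2] using this
  have hD : (a.1 - b.1) * (a.1 - c.1) + (a.2 - b.2) * (a.2 - c.2)
      = (a.1 - b.1) ^ 2 + (a.2 - b.2) ^ 2 := by
    apply mul_left_cancel₀ h2; linear_combination -hbc - h
  ext
  · apply mul_left_cancel₀ h0
    linear_combination (a.1 - b.1) * hD - (a.2 - b.2) * hX
  · apply mul_left_cancel₀ h0
    linear_combination (a.2 - b.2) * hD + (a.1 - b.1) * hX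

variable [Fintype K]

/-- The circle of radius `t` about the origin. -/
noncomputable def circ (t : K) : Finset (K × K) := univ.filter fun z => z.1 ^ 2 + z.2 ^ 2 = t

/-- The translation parts `u` for which `z ↦ w z̄ + u` is a reflection. -/
noncomputable def kerS (w : K × K) : Finset (K × K) := univ.filter fun u => InKer w u

variable (K) in
/-- The reflections in non-isotropic lines, as pairs `⟨w, u⟩` standing for `z ↦ w z̄ + u`. -/
noncomputable def refls : Finset (Σ _ : K × K, K × K) := (circ (1 : K)).sigma kerS


lemma mem_refls {g : Σ _ : K × K, K × K} :
    g ∈ refls K ↔ g.1.1 ^ 2 + g.1.2 ^ 2 = 1 ∧ InKer g.1 g.2 := by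
  simp [refls, circ, kerS]

lemma act_act {g : Σ _ : K × K, K × K} (hg : g ∈ refls K) (z : K × K) :
    act g (act g z) = z := by
  obtain ⟨h1, h2, h3⟩ := mem_refls.1 hg
  ext
  · simp only [act]; linear_combination z.1 * h1 + h2
  · simp only [act]; linear_combination z.2 * h1 + h3

lemma fdist_act {g : Σ _ : K × K, K × K} (hg : g ∈ refls K) (x y : K × K) :
    fdist (act g x) (act g y) = fdist x y := by
  obtain ⟨h1, -⟩ := mem_refls.1 hg
  simp only [act, fdist]
  linear_combination ((x.1 - y.1) ^ 2 + (x.2 - y.2) ^ 2) * h1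

lemma refl_unique (h2 : (2 : K) ≠ 0) {g g' : Σ _ : K × K, K × K} (hg : g ∈ refls K)
    (hg' : g' ∈ refls K) {b : K × K} (h : act g b = act g' b) (hb : act g b ≠ b) : g = g' := by
  obtain ⟨h1, h3, h4⟩ := mem_refls.1 hg
  obtain ⟨h1', h3', h4'⟩ := mem_refls.1 hg'
  obtain ⟨w, u⟩ := g
  obtain ⟨w', u'⟩ := g'
  have ha := congrArg Prod.fst h
  have hc := congrArg Prod.snd h
  simp only [act] at *
  have hw : w = w' := by
    refine inKer_unique h2 (u := (w.1 * b.1 + w.2 * b.2 + u.1 - b.1, w.2 * b.1 - w.1 * b.2 + u.2 - b.2))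
      ⟨?_, ?_⟩ ⟨?_, ?_⟩ ?_
    · simp only; linear_combination h3 + b.1 * h1
    · simp only; linear_combination h4 + b.2 * h1
    · simp only; rw [ha, hc]; linear_combination h3' + b.1 * h1'
    · simp only; rw [ha, hc]; linear_combination h4' + b.2 * h1'
    · intro h0
      apply hb
      have e1 := congrArg Prod.fst h0
      have e2 := congrArg Prod.snd h0
      simp only [Prod.fst_zero, Prod.snd_zero] at e1 e2
      ext
      · exact sub_eq_zero.1 e1
      · exact sub_eq_zero.1 e2
  subst hw
  have hu : u = u' := by
    ext
    · simpa using ha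
    · simpa using hc
  rw [hu]

/-- Points at equal distance from `b` and `c` lie on the axis of the reflection swapping them. -/
lemma exists_refl {a b c : K × K} (hbc : fdist b c ≠ 0) (h : fdist a b = fdist a c) :
    ∃ g ∈ refls K, act g b = c ∧ act g a = a := by
  have hN : (b.1 - c.1) ^ 2 + (b.2 - c.2) ^ 2 ≠ 0 := hbc
  simp only [fdist] at h
  set n := (b.1 - c.1) ^ 2 + (b.2 - c.2) ^ 2 with hn
  refine ⟨⟨(((b.2 - c.2) ^ 2 - (b.1 - c.1) ^ 2) / n, -2 * (b.1 - c.1) * (b.2 - c.2) / n),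
    (c.1 - (((b.2 - c.2) ^ 2 - (b.1 - c.1) ^ 2) / n * b.1
        + -2 * (b.1 - c.1) * (b.2 - c.2) / n * b.2),
     c.2 - (-2 * (b.1 - c.1) * (b.2 - c.2) / n * b.1
        - ((b.2 - c.2) ^ 2 - (b.1 - c.1) ^ 2) / n * b.2))⟩, mem_refls.2 ⟨?_, ?_, ?_⟩, ?_, ?_⟩
  · simp only; field_simp; rw [hn]; ring
  · simp only; field_simp; rw [hn]; ring
  · simp only; field_simp; rw [hn]; ring
  · ext <;> simp [act]
  · ext
    · simp only [act]; field_simp; rw [hn]; linear_combination (b.1 - c.1) * h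
    · simp only [act]; field_simp; rw [hn]; linear_combination (b.2 - c.2) * h

lemma circ_card_le (t : K) : (circ t).card ≤ 2 * Fintype.card K := by
  have h := Finset.card_le_mul_card_image (f := Prod.fst) (circ t) 2 (by
    intro a _
    by_cases hne : ((circ t).filter fun z => z.1 = a).Nonempty
    · obtain ⟨z, hz⟩ := hne
      refine (Finset.card_le_card (t := {(a, z.2), (a, -z.2)}) ?_).trans Finset.card_le_two
      intro y hy
      simp only [circ, mem_filter, mem_univ, true_and, mem_insert, mem_singleton] at hy hz ⊢
      have : (y.2 - z.2) * (y.2 + z.2) = 0 := by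
        have := hy.1.trans hz.1.symm
        rw [hy.2, hz.2] at this
        linear_combination this
      rcases mul_eq_zero.1 this with h | h
      · left; ext; exacts [hy.2, sub_eq_zero.1 h]
      · right; ext; exacts [hy.2, eq_neg_of_add_eq_zero_left h]
    · rw [Finset.not_nonempty_iff_eq_empty.1 hne]; simp)
  exact h.trans (Nat.mul_le_mul_left 2 (Finset.card_le_univ _))

/-- The stereographic parametrisation gives at least `q - 2` points on the unit circle. -/
lemma le_circ_card (h2 : (2 : K) ≠ 0) : Fintype.card K ≤ (circ (1 : K)).card + 2 := by
  have h4 : ((univ : Finset K).filter fun t => 1 + t ^ 2 = 0).card ≤ 2 := by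
    by_cases hne : ((univ : Finset K).filter fun t => 1 + t ^ 2 = 0).Nonempty
    · obtain ⟨z, hz⟩ := hne
      refine (Finset.card_le_card (t := {z, -z}) ?_).trans Finset.card_le_two
      intro y hy
      simp only [mem_filter, mem_univ, true_and, mem_insert, mem_singleton] at hy hz ⊢
      exact sq_eq_sq_iff_eq_or_eq_neg.1 (by linear_combination hy - hz)
    · rw [Finset.not_nonempty_iff_eq_empty.1 hne]; simp
  have h3 : ((univ : Finset K).filter fun t => ¬ (1 + t ^ 2 = 0)).card ≤ (circ (1 : K)).card := by
    refine Finset.card_le_card_of_injOn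
      (fun t => ((1 - t ^ 2) / (1 + t ^ 2), 2 * t / (1 + t ^ 2))) ?_ ?_
    · intro t ht
      have ht : ¬ (1 + t ^ 2 = 0) := by simpa using ht
      simp only [circ, coe_filter, mem_univ, true_and, Set.mem_ofPred_eq]
      field_simp
      ring
    · intro t ht s hs hts
      have ht : ¬ (1 + t ^ 2 = 0) := by simpa using ht
      have hs : ¬ (1 + s ^ 2 = 0) := by simpa using hs
      simp only [Prod.mk.injEq] at hts
      obtain ⟨e1, e2⟩ := hts
      -- `1 + x = 2 / (1 + t²)` and `y = 2 t / (1 + t²)` recover `t`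
      rw [div_eq_div_iff ht hs] at e1 e2
      have e3 : t ^ 2 = s ^ 2 := by
        apply mul_left_cancel₀ h2; linear_combination -e1
      have e4 : (2 * (1 + s ^ 2)) * t = (2 * (1 + s ^ 2)) * s := by
        rw [e3] at e2; linear_combination e2
      exact mul_left_cancel₀ (mul_ne_zero h2 hs) e4
  have := Finset.card_filter_add_card_filter_not (s := (univ : Finset K)) (fun t => 1 + t ^ 2 = 0)
  rw [Finset.card_univ] at this
  omega

lemma kerS_card (h2 : (2 : K) ≠ 0) {w : K × K} (hw : w ∈ circ (1 : K)) :
    (kerS w).card = Fintype.card K := by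
  have hw : w.1 ^ 2 + w.2 ^ 2 = 1 := by simpa [circ] using hw
  rw [← Finset.card_univ]
  symm
  by_cases hp : 1 - w.1 = 0
  · have e1 : w.1 = 1 := (sub_eq_zero.1 hp).symm
    have e2 : w.2 = 0 := by simpa [e1] using hw
    refine Finset.card_bij (fun t _ => ((0 : K), t)) ?_ ?_ ?_
    · intro t _; simp [kerS, InKer, e1, e2]
    · intro t _ s _ h; simpa using h
    · intro u hu
      have hu : (1 + 1 : K) * u.1 = 0 := by simpa [kerS, InKer, e1, e2] using hu
      rw [one_add_one_eq_two] at hu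
      have : u.1 = 0 := by simpa [h2] using hu
      exact ⟨u.2, mem_univ _, by ext <;> simp [this]⟩
  · refine Finset.card_bij (fun t _ => (t, -w.2 * t / (1 - w.1))) ?_ ?_ ?_
    · intro t _
      refine Finset.mem_filter.2 ⟨mem_univ _, ?_, ?_⟩
      · field_simp; linear_combination -t * hw
      · field_simp; ring
    · intro t _ s _ h; exact (Prod.mk.inj h).1
    · intro u hu
      have hu : InKer w u := by simpa [kerS] using hu
      refine ⟨u.1, mem_univ _, ?_⟩
      ext
      · rfl
      · simp only; field_simp; linear_combination -hu.2

lemma refls_card (h2 : (2 : K) ≠ 0) :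
    (refls K).card = (circ (1 : K)).card * Fintype.card K := by
  rw [refls, Finset.card_sigma, Finset.sum_congr rfl fun w hw => kerS_card h2 hw]
  simp

/-- All non-empty circles of non-zero radius have at most as many points as the unit circle:
divide by one of the points. -/
lemma circ_card_le_unit {t : K} (ht : t ≠ 0) : (circ t).card ≤ (circ (1 : K)).card := by
  by_cases hne : (circ t).Nonempty
  · obtain ⟨d, hd⟩ := hne
    have hd : d.1 ^ 2 + d.2 ^ 2 = t := by simpa [circ] using hd
    refine Finset.card_le_card_of_injOn
      (fun z => ((z.1 * d.1 + z.2 * d.2) / t, (z.2 * d.1 - z.1 * d.2) / t)) ?_ ?_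
    · intro z hz
      have hz : z.1 ^ 2 + z.2 ^ 2 = t := by simpa [circ] using hz
      simp only [circ, coe_filter, mem_univ, true_and, Set.mem_ofPred_eq]
      field_simp
      linear_combination t * hd + (d.1 ^ 2 + d.2 ^ 2) * hz
    · intro z hz y hy h
      simp only [Prod.mk.injEq] at h
      obtain ⟨e1, e2⟩ := h
      rw [div_left_inj' ht] at e1 e2
      have hd' : d.1 ^ 2 + d.2 ^ 2 ≠ 0 := by rw [hd]; exact ht
      ext
      · apply mul_right_cancel₀ hd'; linear_combination d.1 * e1 - d.2 * e2
      · apply mul_right_cancel₀ hd'; linear_combination d.2 * e1 + d.1 * e2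
  · rw [Finset.not_nonempty_iff_eq_empty.1 hne]; simp

lemma card_fdist_le (x : K × K) (t : K) (U : Finset (K × K)) :
    (U.filter fun y => fdist x y = t).card ≤ 2 * Fintype.card K := by
  refine le_trans ?_ (circ_card_le t)
  refine Finset.card_le_card_of_injOn (fun y => (x.1 - y.1, x.2 - y.2)) ?_ ?_
  · intro y hy
    have hy := (Finset.mem_filter.1 hy).2
    simpa [circ, fdist] using hy
  · intro y _ z _ h
    simp only [Prod.mk.injEq, sub_right_inj] at h
    exact Prod.ext h.1 h.2

end Geometry

end TreeDist

/-! ### Segments carried to each other by reflections -/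

namespace TreeDist

open Finset
open scoped Classical

section Energy

variable {K : Type} [Field K] [Fintype K]

/-- The pairs of reflections carrying the segments `s` and `s'` to a common segment. -/
noncomputable def common (s s' : (K × K) × (K × K)) :
    Finset ((Σ _ : K × K, K × K) × (Σ _ : K × K, K × K)) :=
  (refls K ×ˢ refls K).filter fun p =>
    act p.1 s.1 = act p.2 s'.1 ∧ act p.1 s.2 = act p.2 s'.2

lemma mem_common {s s' : (K × K) × (K × K)} {p} : p ∈ common s s' ↔
    (p.1 ∈ refls K ∧ p.2 ∈ refls K) ∧ act p.1 s.1 = act p.2 s'.1 ∧ act p.1 s.2 = act p.2 s'.2 := by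
  simp [common]

/-- The linear parts of the two reflections carry the difference vectors of `s` and `s'` to the
same vector. -/
lemma common_linear {s s' : (K × K) × (K × K)} {p} (hp : p ∈ common s s') :
    p.1.1.1 * (s.1.1 - s.2.1) + p.1.1.2 * (s.1.2 - s.2.2)
      = p.2.1.1 * (s'.1.1 - s'.2.1) + p.2.1.2 * (s'.1.2 - s'.2.2) ∧
    p.1.1.2 * (s.1.1 - s.2.1) - p.1.1.1 * (s.1.2 - s.2.2)
      = p.2.1.2 * (s'.1.1 - s'.2.1) - p.2.1.1 * (s'.1.2 - s'.2.2) := by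
  obtain ⟨-, h1, h2⟩ := mem_common.1 hp
  simp only [act, Prod.mk.injEq] at h1 h2
  constructor
  · linear_combination h1.1 - h2.1
  · linear_combination h1.2 - h2.2

lemma common_self_card {s : (K × K) × (K × K)} (hs : fdist s.1 s.2 ≠ 0) :
    (common s s).card ≤ (refls K).card := by
  refine Finset.card_le_card_of_injOn Prod.fst ?_ ?_
  · intro p hp
    exact (mem_common.1 hp).1.1
  · -- the two reflections of such a pair coincide
    have key : ∀ p ∈ common s s, p.2 = p.1 := by
      intro p hp
      have hl := common_linear hp
      have hw : p.1.1 = p.2.1 :=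
        w_unique (d := (s.1.1 - s.2.1, s.1.2 - s.2.2)) hs hl.1 hl.2
      obtain ⟨-, h1, -⟩ := mem_common.1 hp
      obtain ⟨⟨w, u⟩, ⟨w', u'⟩⟩ := p
      simp only at hw
      subst hw
      simp only [act, Prod.mk.injEq, add_right_inj] at h1
      simp only [Sigma.mk.injEq, heq_eq_eq, true_and]
      exact Prod.ext h1.1.symm h1.2.symm
    intro p hp p' hp' h
    exact Prod.ext h (by rw [key p hp, key p' hp', h])

/-- A rotation is a product of two reflections in as many ways as there are unit vectors, a
translation in at most `q` ways. -/
lemma common_card (h2 : (2 : K) ≠ 0) {s s' : (K × K) × (K × K)} (hs : fdist s.1 s.2 ≠ 0)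
    (hs' : fdist s'.1 s'.2 ≠ 0) (hne : s ≠ s') :
    (common s s').card ≤ (circ (1 : K)).card + 2 := by
  by_cases hD : s.1 - s.2 = s'.1 - s'.2
  · -- translations: the linear part is determined, and the two translation parts differ by a constant
    have d1 := congrArg Prod.fst hD
    have d2 := congrArg Prod.snd hD
    simp only [Prod.fst_sub, Prod.snd_sub] at d1 d2
    have hw : ∀ p ∈ common s s', p.1.1 = p.2.1 := by
      intro p hp
      have hl := common_linear hp
      rw [← d1, ← d2] at hl
      exact w_unique (d := (s.1.1 - s.2.1, s.1.2 - s.2.2)) hs hl.1 hl.2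
    have he : s'.1 - s.1 ≠ 0 := by
      intro h0
      have h0 := sub_eq_zero.1 h0
      apply hne
      rw [h0] at hD
      exact Prod.ext h0.symm (sub_right_injective hD)
    have hk : ∀ p ∈ common s s', InKer p.1.1 (s'.1 - s.1) := by
      intro p hp
      have e := hw p hp
      obtain ⟨⟨m1, m2⟩, h1, -⟩ := mem_common.1 hp
      obtain ⟨n1, k1, k2⟩ := mem_refls.1 m1
      obtain ⟨-, l1, l2⟩ := mem_refls.1 m2
      simp only [act, Prod.mk.injEq] at h1
      rw [← e] at h1 l1 l2
      obtain ⟨h1, h3⟩ := h1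
      set w := p.1.1
      constructor
      · simp only [Prod.fst_sub, Prod.snd_sub]
        linear_combination (-(s'.1.1 - s.1.1)) * n1 - w.1 * h1 - w.2 * h3 + k1 - l1 - h1
      · simp only [Prod.fst_sub, Prod.snd_sub]
        linear_combination (-(s'.1.2 - s.1.2)) * n1 + w.1 * h3 - w.2 * h1 + k2 - l2 - h3
    refine le_trans ?_ (le_circ_card h2)
    by_cases hem : (common s s').Nonempty
    · obtain ⟨p₀, hp₀⟩ := hem
      have hp₀w : p₀.1.1 ∈ circ (1 : K) := by
        have := (mem_refls.1 (mem_common.1 hp₀).1.1).1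
        simpa [circ] using this
      have hall : ∀ p ∈ common s s', p.1.1 = p₀.1.1 := fun p hp =>
        inKer_unique h2 (hk p hp) (hk p₀ hp₀) he
      rw [← kerS_card h2 hp₀w]
      refine Finset.card_le_card_of_injOn (fun p => p.1.2) ?_ ?_
      · intro p hp
        have := (mem_refls.1 (mem_common.1 hp).1.1).2
        rw [hall p hp] at this
        exact Finset.mem_coe.2 (Finset.mem_filter.2 ⟨mem_univ _, this⟩)
      · intro p hp p' hp' h
        have a1 := hall p hp
        have a2 := hall p' hp'
        have b1 := (hw p hp).symm.trans a1
        have b2 := (hw p' hp').symm.trans a2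
        obtain ⟨-, c1, -⟩ := mem_common.1 hp
        obtain ⟨-, c2, -⟩ := mem_common.1 hp'
        obtain ⟨⟨w1, u1⟩, ⟨w2, u2⟩⟩ := p
        obtain ⟨⟨w1', u1'⟩, ⟨w2', u2'⟩⟩ := p'
        simp only at a1 a2 b1 b2 h
        subst h
        rw [a1, b1] at c1
        rw [a2, b2] at c2
        have := c1.symm.trans c2
        simp only [act, Prod.mk.injEq, add_right_inj] at this
        rw [a1, a2, b1, b2, Prod.ext this.1 this.2]
    · rw [Finset.not_nonempty_iff_eq_empty.1 hem]; simp
  · -- rotations: the first linear part determines everything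
    refine le_trans ?_ (Nat.le_add_right _ 2)
    refine Finset.card_le_card_of_injOn (fun p => p.1.1) ?_ ?_
    · intro p hp
      have := (mem_refls.1 (mem_common.1 hp).1.1).1
      simpa [circ] using this
    · intro p hp p' hp' h
      have hl := common_linear hp
      have hl' := common_linear hp'
      obtain ⟨⟨m1, m2⟩, h1, -⟩ := mem_common.1 hp
      obtain ⟨⟨m1', m2'⟩, h1', -⟩ := mem_common.1 hp'
      obtain ⟨n1, k1, k2⟩ := mem_refls.1 m1
      obtain ⟨n2, l1, l2⟩ := mem_refls.1 m2
      obtain ⟨-, k1', k2'⟩ := mem_refls.1 m1'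
      obtain ⟨-, l1', l2'⟩ := mem_refls.1 m2'
      simp only at h
      have hw : p.2.1 = p'.2.1 := by
        rw [h] at hl
        exact w_unique (d := (s'.1.1 - s'.2.1, s'.1.2 - s'.2.2)) hs'
          (hl.1.symm.trans hl'.1) (hl.2.symm.trans hl'.2)
      obtain ⟨⟨w1, u1⟩, ⟨w2, u2⟩⟩ := p
      obtain ⟨⟨w1', u1'⟩, ⟨w2', u2'⟩⟩ := p'
      simp only at h hw
      subst h hw
      simp only [act, Prod.mk.injEq] at *
      -- `w₁ ≠ w₂`, so the spaces of admissible translation parts meet only in `0`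
      have hww : w1 ≠ w2 := by
        rintro rfl
        apply hD
        obtain ⟨e1, e2⟩ := hl
        ext
        · simp only [Prod.fst_sub]
          linear_combination w1.1 * e1 + w1.2 * e2 - (s.1.1 - s.2.1 - (s'.1.1 - s'.2.1)) * n1
        · simp only [Prod.snd_sub]
          linear_combination w1.2 * e1 - w1.1 * e2 - (s.1.2 - s.2.2 - (s'.1.2 - s'.2.2)) * n1
      have hd1 : u1.1 - u1'.1 = u2.1 - u2'.1 := by linear_combination h1.1 - h1'.1
      have hd2 : u1.2 - u1'.2 = u2.2 - u2'.2 := by linear_combination h1.2 - h1'.2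
      have hu : u1 - u1' = 0 := by
        by_contra hu
        refine hww (inKer_unique h2 (u := u1 - u1') ⟨?_, ?_⟩ ⟨?_, ?_⟩ hu)
        · simp only [Prod.fst_sub, Prod.snd_sub]; linear_combination k1 - k1'
        · simp only [Prod.fst_sub, Prod.snd_sub]; linear_combination k2 - k2'
        · simp only [Prod.fst_sub, Prod.snd_sub]; rw [hd1, hd2]; linear_combination l1 - l1'
        · simp only [Prod.fst_sub, Prod.snd_sub]; rw [hd1, hd2]; linear_combination l2 - l2'
      have g1 := congrArg Prod.fst hu
      have g2 := congrArg Prod.snd hu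
      simp only [Prod.fst_sub, Prod.snd_sub, Prod.fst_zero, Prod.snd_zero] at g1 g2
      rw [g1] at hd1
      rw [g2] at hd2
      have e1 : u1 = u1' := sub_eq_zero.1 hu
      have e2 : u2 = u2' := Prod.ext (sub_eq_zero.1 hd1.symm) (sub_eq_zero.1 hd2.symm)
      rw [e1, e2]
      exact ⟨rfl, rfl⟩

/-- The segments of length `t` with end points in `U`. -/
noncomputable def segs (U : Finset (K × K)) (t : K) : Finset ((K × K) × (K × K)) :=
  (U ×ˢ U).filter fun s => fdist s.1 s.2 = t

/-- The reflection of a segment. -/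
def act₂ (g : Σ _ : K × K, K × K) (s : (K × K) × (K × K)) : (K × K) × (K × K) :=
  (act g s.1, act g s.2)

/-- The number of reflections carrying `s` into `S`. -/
noncomputable def hits (S : Finset ((K × K) × (K × K))) (s : (K × K) × (K × K)) : ℕ :=
  ((refls K).filter fun g => act₂ g s ∈ S).card

lemma act₂_act₂ {g : Σ _ : K × K, K × K} (hg : g ∈ refls K) (s) : act₂ g (act₂ g s) = s := by
  simp [act₂, act_act hg]

lemma segs_univ_card_le {t : K} (ht : t ≠ 0) :
    (segs (univ : Finset (K × K)) t).card ≤ Fintype.card K ^ 2 * (circ (1 : K)).card := by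
  have : (segs (univ : Finset (K × K)) t).card ≤ ((univ : Finset (K × K)) ×ˢ circ t).card := by
    refine Finset.card_le_card_of_injOn (fun s => (s.1, (s.1.1 - s.2.1, s.1.2 - s.2.2))) ?_ ?_
    · intro s hs
      have hs := (Finset.mem_filter.1 hs).2
      simpa [circ, fdist] using hs
    · intro s _ s' _ h
      simp only [Prod.mk.injEq] at h
      obtain ⟨h1, h2, h3⟩ := h
      rw [h1] at h2 h3
      exact Prod.ext h1 (Prod.ext (sub_right_injective h2) (sub_right_injective h3))
  rw [Finset.card_product, Finset.card_univ, Fintype.card_prod, ← sq] at this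
  exact this.trans (Nat.mul_le_mul_left _ (circ_card_le_unit ht))

lemma sum_hits (U : Finset (K × K)) (t : K) :
    ∑ s ∈ segs univ t, hits (segs U t) s = (refls K).card * (segs U t).card := by
  simp only [hits, Finset.card_filter]
  rw [Finset.sum_comm]
  have : ∀ g ∈ refls K, ∑ s ∈ segs univ t, (if act₂ g s ∈ segs U t then 1 else 0)
      = (segs U t).card := by
    intro g hg
    rw [← Finset.card_filter]
    refine Finset.card_bij (fun s _ => act₂ g s) ?_ ?_ ?_
    · intro s hs; exact (Finset.mem_filter.1 hs).2
    · intro s _ s' _ h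
      rw [← act₂_act₂ hg s, h, act₂_act₂ hg]
    · intro s hs
      refine ⟨act₂ g s, Finset.mem_filter.2 ⟨?_, ?_⟩, act₂_act₂ hg s⟩
      · refine Finset.mem_filter.2 ⟨by simp, ?_⟩
        rw [← (Finset.mem_filter.1 hs).2]
        exact fdist_act hg _ _
      · rwa [act₂_act₂ hg]
  rw [Finset.sum_congr rfl this]
  simp

lemma sum_hits_sq (h2 : (2 : K) ≠ 0) (U : Finset (K × K)) {t : K} (ht : t ≠ 0) :
    ∑ s ∈ segs univ t, hits (segs U t) s ^ 2
      ≤ (segs U t).card ^ 2 * ((circ (1 : K)).card + 2) + (segs U t).card * (refls K).card := by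
  set S := segs U t with hS
  let Z : Finset (Σ _ : (K × K) × (K × K), (Σ _ : K × K, K × K) × (Σ _ : K × K, K × K)) :=
    (segs univ t).sigma fun s => ((refls K).filter fun g => act₂ g s ∈ S) ×ˢ
      ((refls K).filter fun g => act₂ g s ∈ S)
  have hZ : Z.card = ∑ s ∈ segs univ t, hits S s ^ 2 := by
    rw [Finset.card_sigma]
    refine Finset.sum_congr rfl fun s _ => ?_
    rw [Finset.card_product, hits, sq]
  rw [← hZ]
  have hmap : ∀ z ∈ Z, (act₂ z.2.1 z.1, act₂ z.2.2 z.1) ∈ S ×ˢ S := by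
    intro z hz
    have hz := (Finset.mem_sigma.1 hz).2
    simp only [mem_product, mem_filter] at hz ⊢
    exact ⟨hz.1.2, hz.2.2⟩
  rw [Finset.card_eq_sum_card_fiberwise hmap]
  have hS0 : ∀ s ∈ S, fdist s.1 s.2 ≠ 0 := by
    intro s hs; rw [(Finset.mem_filter.1 hs).2]; exact ht
  calc _ ≤ ∑ p ∈ S ×ˢ S, (((circ (1 : K)).card + 2) + if p.1 = p.2 then (refls K).card else 0) := by
        refine Finset.sum_le_sum fun p hp => ?_
        obtain ⟨p1, p2⟩ := Finset.mem_product.1 hp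
        have hle : (Z.filter fun z => (act₂ z.2.1 z.1, act₂ z.2.2 z.1) = p).card
            ≤ (common p.1 p.2).card := by
          have hback : ∀ z ∈ Z.filter fun z => (act₂ z.2.1 z.1, act₂ z.2.2 z.1) = p,
              z.2.1 ∈ refls K ∧ z.2.2 ∈ refls K ∧ act₂ z.2.1 p.1 = z.1 ∧ act₂ z.2.2 p.2 = z.1 := by
            intro z hz
            obtain ⟨hz, hzp⟩ := Finset.mem_filter.1 hz
            have hz := (Finset.mem_sigma.1 hz).2
            simp only [mem_product, mem_filter] at hz
            rw [← hzp]
            exact ⟨hz.1.1, hz.2.1, act₂_act₂ hz.1.1 _, act₂_act₂ hz.2.1 _⟩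
          refine Finset.card_le_card_of_injOn (fun z => z.2) ?_ ?_
          · intro z hz
            obtain ⟨a, b, c, d⟩ := hback z hz
            have e := c.trans d.symm
            exact Finset.mem_coe.2 (mem_common.2 ⟨⟨a, b⟩, congrArg Prod.fst e, congrArg Prod.snd e⟩)
          · intro z hz z' hz' h
            obtain ⟨_, _, c, _⟩ := hback z hz
            obtain ⟨_, _, c', _⟩ := hback z' hz'
            simp only at h
            have e : z.1 = z'.1 := by rw [← c, ← c', h]
            obtain ⟨z1, z2⟩ := z
            obtain ⟨z1', z2'⟩ := z'
            simp only at h e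
            rw [h, e]
        refine hle.trans ?_
        split_ifs with h
        · rw [h]
          exact (common_self_card (hS0 _ p2)).trans (Nat.le_add_left _ _)
        · exact common_card h2 (hS0 _ p1) (hS0 _ p2) h
    _ = _ := by
        rw [Finset.sum_add_distrib, Finset.sum_const, Finset.card_product, smul_eq_mul,
          Finset.sum_product]
        simp only [Finset.sum_ite_eq]
        rw [Finset.sum_congr rfl fun s hs => if_pos hs]
        simp [sq]

/-- Pseudo-randomness of the graph joining two segments of length `t` when a reflection swaps
them: the number of edges inside a set of `n` segments is `O(n² / q + q n)`. The proof is a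
variance computation. -/
lemma sum_hits_segs (h2 : (2 : K) ≠ 0) (U : Finset (K × K)) {t : K} (ht : t ≠ 0) :
    (∑ s ∈ segs U t, (hits (segs U t) s : ℝ))
      ≤ 3 * ((segs U t).card : ℝ) ^ 2 / Fintype.card K
        + 2 * Fintype.card K * (segs U t).card := by
  have hq : (0 : ℝ) < Fintype.card K := by exact_mod_cast Fintype.card_pos
  have a1 : (∑ s ∈ segs univ t, (hits (segs U t) s : ℝ))
      = (circ (1 : K)).card * Fintype.card K * (segs U t).card := by
    have := sum_hits U t
    rw [refls_card h2] at this
    exact_mod_cast this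
  have a2 : (∑ s ∈ segs univ t, (hits (segs U t) s : ℝ) ^ 2)
      ≤ (segs U t).card ^ 2 * ((circ (1 : K)).card + 2)
        + (segs U t).card * ((circ (1 : K)).card * Fintype.card K) := by
    have := sum_hits_sq h2 U ht
    rw [refls_card h2] at this
    exact_mod_cast this
  have a3 : ((segs (univ : Finset (K × K)) t).card : ℝ)
      ≤ Fintype.card K ^ 2 * (circ (1 : K)).card := by
    exact_mod_cast segs_univ_card_le ht
  have a4 : ((circ (1 : K)).card : ℝ) ≤ 2 * Fintype.card K := by
    exact_mod_cast circ_card_le (1 : K)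
  set S := segs U t with hS
  set q : ℝ := (Fintype.card K : ℝ) with hqd
  set n : ℝ := (S.card : ℝ) with hn
  set h : ℝ := ((circ (1 : K)).card : ℝ) with hh
  have hn0 : 0 ≤ n := Nat.cast_nonneg _
  have hsub : S ⊆ segs univ t := by
    intro s hs
    have := (Finset.mem_filter.1 hs).2
    exact Finset.mem_filter.2 ⟨by simp, this⟩
  have var : ∑ s ∈ S, ((hits S s : ℝ) - n / q) ^ 2 ≤ 2 * n ^ 2 + 2 * q ^ 2 * n := by
    calc _ ≤ ∑ s ∈ segs univ t, ((hits S s : ℝ) - n / q) ^ 2 :=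
          Finset.sum_le_sum_of_subset_of_nonneg hsub fun _ _ _ => sq_nonneg _
      _ = (∑ s ∈ segs univ t, (hits S s : ℝ) ^ 2)
            - 2 * (n / q) * (∑ s ∈ segs univ t, (hits S s : ℝ))
            + (segs (univ : Finset (K × K)) t).card * (n / q) ^ 2 := by
          rw [Finset.mul_sum, ← Finset.sum_sub_distrib, ← nsmul_eq_mul, ← Finset.sum_const,
            ← Finset.sum_add_distrib]
          exact Finset.sum_congr rfl fun s _ => by ring
      _ ≤ (n ^ 2 * (h + 2) + n * (h * q)) - 2 * (n / q) * (h * q * n)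
            + q ^ 2 * h * (n / q) ^ 2 := by
          rw [a1]; gcongr
      _ = 2 * n ^ 2 + n * (h * q) := by field_simp; ring
      _ ≤ 2 * n ^ 2 + n * (2 * q * q) := by gcongr
      _ = _ := by ring
  have cs : (∑ s ∈ S, ((hits S s : ℝ) - n / q)) ^ 2 ≤ n * (2 * n ^ 2 + 2 * q ^ 2 * n) :=
    sq_sum_le_card_mul_sum_sq.trans (mul_le_mul_of_nonneg_left var hn0)
  have b : (∑ s ∈ S, ((hits S s : ℝ) - n / q)) ≤ 2 * (n ^ 2 / q) + 2 * q * n := by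
    refine abs_le_of_sq_le_sq' ?_ (by positivity) |>.2
    refine cs.trans ?_
    have e : (n ^ 2 / q) * q = n ^ 2 := by field_simp
    have hy : 0 ≤ n ^ 2 / q := by positivity
    set y := n ^ 2 / q
    have e2 : n * (2 * n ^ 2 + 2 * q ^ 2 * n) = 2 * n * q * y + 2 * q ^ 2 * n ^ 2 := by
      linear_combination -2 * n * e
    rw [e2]
    nlinarith [mul_nonneg (mul_nonneg hn0 hq.le) hy, sq_nonneg (q * n), sq_nonneg y]
  rw [Finset.sum_sub_distrib, Finset.sum_const, nsmul_eq_mul, ← hn] at b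
  have e : n * (n / q) = n ^ 2 / q := by ring
  have e' : 3 * n ^ 2 / q = 3 * (n ^ 2 / q) := by ring
  rw [e] at b
  rw [e']
  linarith

end Energy

end TreeDist

/-! ### Isosceles triangles and pinned distances -/

namespace TreeDist

open Finset
open scoped Classical

section Pinned

variable {K : Type} [Field K] [Fintype K]

/-- The points of `U` fixed by a reflection, i.e. lying on its axis. -/
noncomputable def fixd (U : Finset (K × K)) (g : Σ _ : K × K, K × K) : Finset (K × K) :=
  U.filter fun a => act g a = a

/-- The points of `U` whose mirror image is in `U`, at non-zero distance. -/
noncomputable def moved (U : Finset (K × K)) (g : Σ _ : K × K, K × K) : Finset (K × K) :=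
  U.filter fun b => act g b ∈ U ∧ fdist b (act g b) ≠ 0

/-- The pairs `(b, c)` equidistant from `a`, with `‖b - c‖ ≠ 0`. -/
noncomputable def trip (U : Finset (K × K)) (a : K × K) : Finset ((K × K) × (K × K)) :=
  (U ×ˢ U).filter fun p => fdist a p.1 = fdist a p.2 ∧ fdist p.1 p.2 ≠ 0

/-- The pairs `(b, c)` lying on a common circle of non-zero radius about `a`. -/
noncomputable def tripS (U : Finset (K × K)) (a : K × K) : Finset ((K × K) × (K × K)) :=
  ((U.filter fun b => fdist a b ≠ 0) ×ˢ (U.filter fun b => fdist a b ≠ 0)).filter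
    fun p => fdist a p.1 = fdist a p.2

omit [Fintype K] in
lemma tripS_card_le (h2 : (2 : K) ≠ 0) (U : Finset (K × K)) (a : K × K) :
    (tripS U a).card ≤ U.card + (trip U a).card := by
  rw [← Finset.diag_card U]
  refine le_trans (Finset.card_le_card ?_) (Finset.card_union_le _ _)
  intro p hp
  simp only [tripS, mem_filter, mem_product] at hp
  obtain ⟨⟨⟨h1, h3⟩, h4, h5⟩, h6⟩ := hp
  simp only [mem_union, mem_diag, trip, mem_filter, mem_product]
  by_cases h : fdist p.1 p.2 = 0
  · exact Or.inl ⟨h1, eq_of_fdist_eq_zero h6 h3 h h2⟩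
  · exact Or.inr ⟨⟨h1, h4⟩, h6, h⟩

omit [Field K] [Fintype K] in
lemma sum_sq_fiber {α β : Type} (A : Finset α) (f : α → β) (D : Finset β)
    (h : ∀ a ∈ A, f a ∈ D) :
    ∑ y ∈ D, (A.filter fun a => f a = y).card ^ 2
      = ((A ×ˢ A).filter fun p => f p.1 = f p.2).card := by
  rw [Finset.card_eq_sum_card_fiberwise (f := fun p => f p.1) (t := D)]
  · refine Finset.sum_congr rfl fun y _ => ?_
    rw [sq, ← Finset.card_product]
    congr 1
    ext p
    simp only [mem_product, mem_filter]
    constructor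
    · rintro ⟨⟨a, b⟩, c, d⟩; exact ⟨⟨⟨a, c⟩, b.trans d.symm⟩, b⟩
    · rintro ⟨⟨⟨a, c⟩, b⟩, d⟩; exact ⟨⟨a, d⟩, c, b.symm.trans d⟩
  · intro p hp
    exact h _ (Finset.mem_product.1 (Finset.mem_filter.1 hp).1).1

/-- The distance energy is controlled by the number of isosceles triangles. -/
lemma sum_segs_sq (U : Finset (K × K)) :
    ∑ t ∈ univ.erase (0 : K), (segs U t).card ^ 2 ≤ U.card * ∑ a ∈ U, (tripS U a).card := by
  have h1 : ∀ t ∈ univ.erase (0 : K), (segs U t).card ^ 2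
      ≤ U.card * ∑ a ∈ U, ((U.filter fun b => fdist a b ≠ 0).filter
          fun b => fdist a b = t).card ^ 2 := by
    intro t ht
    have ht := Finset.ne_of_mem_erase ht
    have : (segs U t).card = ∑ a ∈ U, ((U.filter fun b => fdist a b ≠ 0).filter
          fun b => fdist a b = t).card := by
      simp only [segs, Finset.card_filter, Finset.filter_filter]
      rw [Finset.sum_product]
      refine Finset.sum_congr rfl fun a _ => Finset.sum_congr rfl fun b _ => ?_
      by_cases h : fdist a b = t
      · simp [h, ht]
      · simp [h]
    rw [this]
    exact sq_sum_le_card_mul_sum_sq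
  refine (Finset.sum_le_sum h1).trans ?_
  rw [← Finset.mul_sum, Finset.sum_comm]
  refine Nat.mul_le_mul_left _ (Finset.sum_le_sum fun a _ => ?_)
  rw [sum_sq_fiber]
  · rfl
  · intro b hb
    exact Finset.mem_erase.2 ⟨(Finset.mem_filter.1 hb).2, mem_univ _⟩

/-- An upper bound for the bisector energy: split the quadruples `(b, gb, b', gb')` by the length
of the segment `bb'`. -/
lemma sum_moved_sq (h2 : (2 : K) ≠ 0) (U : Finset (K × K)) :
    (∑ g ∈ refls K, ((moved U g).card : ℝ) ^ 2)
      ≤ 4 * Fintype.card K * (U.card : ℝ) ^ 2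
        + 3 / Fintype.card K * (U.card * ∑ a ∈ U, ((tripS U a).card : ℝ)) := by
  let Z : Finset (Σ _ : (Σ _ : K × K, K × K), (K × K) × (K × K)) :=
    (refls K).sigma fun g => moved U g ×ˢ moved U g
  have hZ : (Z.card : ℝ) = ∑ g ∈ refls K, ((moved U g).card : ℝ) ^ 2 := by
    rw [Finset.card_sigma]
    push_cast
    refine Finset.sum_congr rfl fun s _ => ?_
    rw [Finset.card_product, sq]
    push_cast
    rfl
  have hmem : ∀ z ∈ Z, z.1 ∈ refls K ∧ (z.2.1 ∈ U ∧ act z.1 z.2.1 ∈ U ∧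
      fdist z.2.1 (act z.1 z.2.1) ≠ 0) ∧ (z.2.2 ∈ U ∧ act z.1 z.2.2 ∈ U ∧
      fdist z.2.2 (act z.1 z.2.2) ≠ 0) := by
    intro z hz
    obtain ⟨a, b⟩ := Finset.mem_sigma.1 hz
    simp only [mem_product, moved, mem_filter] at b
    exact ⟨a, b.1, b.2⟩
  have hZ0 : (Z.filter fun z => fdist z.2.1 z.2.2 = 0).card
      ≤ U.card * (U.card * (2 * Fintype.card K)) := by
    have : (Z.filter fun z => fdist z.2.1 z.2.2 = 0).card ≤
        (U.sigma fun b => U ×ˢ (U.filter fun b' => fdist b b' = 0)).card := by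
      refine Finset.card_le_card_of_injOn (fun z => ⟨z.2.1, (act z.1 z.2.1, z.2.2)⟩) ?_ ?_
      · intro z hz
        obtain ⟨hz, h0⟩ := Finset.mem_filter.1 hz
        obtain ⟨-, ⟨a, b, -⟩, c, -⟩ := hmem z hz
        simp only [Finset.coe_sigma, Set.mem_sigma_iff, mem_coe, mem_product, mem_filter]
        exact ⟨a, b, c, h0⟩
      · intro z hz z' hz' h
        obtain ⟨hz, -⟩ := Finset.mem_filter.1 hz
        obtain ⟨hz', -⟩ := Finset.mem_filter.1 hz'
        obtain ⟨a, ⟨-, -, b⟩, -⟩ := hmem z hz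
        obtain ⟨a', -, -⟩ := hmem z' hz'
        obtain ⟨g, y, y'⟩ := z
        obtain ⟨g', x, x'⟩ := z'
        simp only [Sigma.mk.injEq, heq_eq_eq, Prod.mk.injEq] at *
        obtain ⟨rfl, e, rfl⟩ := h
        refine ⟨refl_unique h2 a a' e ?_, rfl, rfl⟩
        intro hf
        rw [hf] at b
        exact b (by simp [fdist])
    refine this.trans ?_
    rw [Finset.card_sigma]
    refine (Finset.sum_le_card_nsmul _ _ (U.card * (2 * Fintype.card K)) fun b _ => ?_).trans
      (by simp)
    rw [Finset.card_product]
    exact Nat.mul_le_mul_left _ (card_fdist_le b 0 U)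
  have hZ1 : (Z.filter fun z => ¬ fdist z.2.1 z.2.2 = 0).card
      ≤ ∑ t ∈ univ.erase (0 : K), ∑ s ∈ segs U t, hits (segs U t) s := by
    rw [Finset.card_eq_sum_card_fiberwise (f := fun z => fdist z.2.1 z.2.2)
      (t := univ.erase (0 : K))]
    · refine Finset.sum_le_sum fun t _ => ?_
      have : ∑ s ∈ segs U t, hits (segs U t) s
          = ((segs U t).sigma fun s => (refls K).filter fun g => act₂ g s ∈ segs U t).card := by
        rw [Finset.card_sigma]; rfl
      rw [this]
      refine Finset.card_le_card_of_injOn (fun z => ⟨z.2, z.1⟩) ?_ ?_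
      · intro z hz
        obtain ⟨hz, ht⟩ := Finset.mem_filter.1 hz
        obtain ⟨hz, h0⟩ := Finset.mem_filter.1 hz
        obtain ⟨h, ⟨a, b, -⟩, c, d, -⟩ := hmem z hz
        simp only [Finset.coe_sigma, Set.mem_sigma_iff, mem_coe, mem_product, mem_filter, segs, act₂]
        exact ⟨⟨⟨a, c⟩, ht⟩, h, ⟨b, d⟩, (fdist_act h _ _).trans ht⟩
      · intro z _ z' _ h
        obtain ⟨g, y⟩ := z
        obtain ⟨g', x⟩ := z'
        simp only [Sigma.mk.injEq, heq_eq_eq] at h ⊢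
        exact ⟨h.2, h.1⟩
    · intro z hz
      exact Finset.mem_coe.2 (Finset.mem_erase.2 ⟨(Finset.mem_filter.1 hz).2, mem_univ _⟩)
  have hq : (0 : ℝ) < Fintype.card K := by exact_mod_cast Fintype.card_pos
  have hsq : (∑ t ∈ univ.erase (0 : K), ((segs U t).card : ℝ) ^ 2)
      ≤ U.card * ∑ a ∈ U, ((tripS U a).card : ℝ) := by
    exact_mod_cast sum_segs_sq U
  have hlin : (∑ t ∈ univ.erase (0 : K), ((segs U t).card : ℝ)) ≤ (U.card : ℝ) ^ 2 := by
    have : ∑ t ∈ univ.erase (0 : K), (segs U t).card ≤ U.card ^ 2 := by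
      rw [sq, ← Finset.card_product, Finset.card_eq_sum_card_fiberwise
        (f := fun s : (K × K) × (K × K) => fdist s.1 s.2) (t := univ) (fun _ _ => by simp)]
      exact Finset.sum_le_sum_of_subset (Finset.subset_univ _)
    exact_mod_cast this
  have hZ1' : ((Z.filter fun z => ¬ fdist z.2.1 z.2.2 = 0).card : ℝ)
      ≤ 3 / Fintype.card K * (U.card * ∑ a ∈ U, ((tripS U a).card : ℝ))
        + 2 * Fintype.card K * (U.card : ℝ) ^ 2 := by
    calc _ ≤ ∑ t ∈ univ.erase (0 : K), ∑ s ∈ segs U t, (hits (segs U t) s : ℝ) := by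
          exact_mod_cast hZ1
      _ ≤ ∑ t ∈ univ.erase (0 : K), (3 / Fintype.card K * ((segs U t).card : ℝ) ^ 2
            + 2 * Fintype.card K * (segs U t).card) := by
          refine Finset.sum_le_sum fun t ht => ?_
          refine (sum_hits_segs h2 U (Finset.ne_of_mem_erase ht)).trans (le_of_eq ?_)
          ring
      _ ≤ _ := by
          rw [Finset.sum_add_distrib, ← Finset.mul_sum, ← Finset.mul_sum]
          gcongr
  have hZ0' : ((Z.filter fun z => fdist z.2.1 z.2.2 = 0).card : ℝ)
      ≤ U.card * (U.card * (2 * Fintype.card K)) := by exact_mod_cast hZ0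
  have hsplit : ((Z.filter fun z => fdist z.2.1 z.2.2 = 0).card : ℝ)
      + (Z.filter fun z => ¬ fdist z.2.1 z.2.2 = 0).card = Z.card := by
    exact_mod_cast Finset.card_filter_add_card_filter_not (s := Z) _
  rw [← hZ, ← hsplit]
  linarith [hZ0', hZ1']

lemma card_refls_fixing (a : K × K) :
    ((refls K).filter fun g => act g a = a).card = (circ (1 : K)).card := by
  symm
  refine Finset.card_bij (fun w _ => ⟨w, (a.1 - (w.1 * a.1 + w.2 * a.2),
    a.2 - (w.2 * a.1 - w.1 * a.2))⟩) ?_ ?_ ?_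
  · intro w hw
    have hw : w.1 ^ 2 + w.2 ^ 2 = 1 := by simpa [circ] using hw
    refine Finset.mem_filter.2 ⟨mem_refls.2 ⟨hw, ?_, ?_⟩, ?_⟩
    · simp only; linear_combination -a.1 * hw
    · simp only; linear_combination -a.2 * hw
    · ext <;> simp [act]
  · intro w _ w' _ h
    simpa using congrArg Sigma.fst h
  · rintro ⟨w, u⟩ hg
    obtain ⟨hg, h⟩ := Finset.mem_filter.1 hg
    have hw := (mem_refls.1 hg).1
    refine ⟨w, by simpa [circ] using hw, ?_⟩
    have h1 := congrArg Prod.fst h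
    have h3 := congrArg Prod.snd h
    simp only [act] at h1 h3
    simp only [Sigma.mk.injEq, heq_eq_eq, true_and]
    ext
    · simp only; linear_combination -h1
    · simp only; linear_combination -h3

/-- Two distinct points lie on at most one axis. -/
lemma card_refls_fixing_two (h2 : (2 : K) ≠ 0) {a b : K × K} (hab : a ≠ b) :
    ((refls K).filter fun g => act g a = a ∧ act g b = b).card ≤ 1 := by
  rw [Finset.card_le_one]
  intro g hg g' hg'
  obtain ⟨hg, h1, h3⟩ := Finset.mem_filter.1 hg
  obtain ⟨hg', h1', h3'⟩ := Finset.mem_filter.1 hg'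
  have hl : ∀ g : Σ _ : K × K, K × K, act g a = a → act g b = b →
      g.1.1 * (a.1 - b.1) + g.1.2 * (a.2 - b.2) = 1 * (a.1 - b.1) ∧
      g.1.2 * (a.1 - b.1) - g.1.1 * (a.2 - b.2) = 1 * (a.2 - b.2) := by
    intro g ha hb
    have e1 := congrArg Prod.fst ha
    have e2 := congrArg Prod.snd ha
    have e3 := congrArg Prod.fst hb
    have e4 := congrArg Prod.snd hb
    simp only [act] at e1 e2 e3 e4
    exact ⟨by linear_combination e1 - e3, by linear_combination e2 - e4⟩
  have hne : (a.1 - b.1, a.2 - b.2) ≠ (0 : K × K) := by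
    intro h0
    apply hab
    have e1 := congrArg Prod.fst h0
    have e2 := congrArg Prod.snd h0
    exact Prod.ext (sub_eq_zero.1 e1) (sub_eq_zero.1 e2)
  have k := hl g h1 h3
  have k' := hl g' h1' h3'
  have hw : g.1 = g'.1 :=
    w_unique (nonisotropic_of_eigen h2 one_ne_zero (d := (a.1 - b.1, a.2 - b.2)) k.1 k.2 hne)
      (k.1.trans k'.1.symm) (k.2.trans k'.2.symm)
  obtain ⟨w, u⟩ := g
  obtain ⟨w', u'⟩ := g'
  simp only at hw
  subst hw
  have := h1.trans h1'.symm
  simp only [act, Prod.mk.injEq, add_right_inj] at this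
  rw [Prod.ext this.1 this.2]

/-- The point-line incidence variance. -/
lemma sum_fixd_var (h2 : (2 : K) ≠ 0) (U : Finset (K × K)) :
    (∑ g ∈ refls K, ((fixd U g).card - (U.card : ℝ) / Fintype.card K) ^ 2)
      ≤ 4 * Fintype.card K * U.card := by
  have a1 : ∑ g ∈ refls K, (fixd U g).card = U.card * (circ (1 : K)).card := by
    simp only [fixd, Finset.card_filter]
    rw [Finset.sum_comm]
    simp only [← Finset.card_filter]
    rw [Finset.sum_congr rfl fun a _ => card_refls_fixing a]
    simp
  have a2 : ∑ g ∈ refls K, (fixd U g).card ^ 2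
      ≤ U.card * (circ (1 : K)).card + U.card ^ 2 := by
    have : ∀ g, (fixd U g).card ^ 2
        = ∑ a ∈ U, ∑ b ∈ U, if act g a = a ∧ act g b = b then 1 else 0 := by
      intro g
      rw [sq, fixd, Finset.card_filter, Finset.sum_mul_sum]
      refine Finset.sum_congr rfl fun a _ => Finset.sum_congr rfl fun b _ => ?_
      by_cases h : act g a = a <;> by_cases h' : act g b = b <;> simp [h, h']
    simp only [this]
    rw [Finset.sum_comm]
    calc _ = ∑ a ∈ U, ∑ b ∈ U, ((refls K).filter fun g => act g a = a ∧ act g b = b).card := by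
          refine Finset.sum_congr rfl fun a _ => ?_
          rw [Finset.sum_comm]
          simp only [Finset.card_filter]
      _ ≤ ∑ a ∈ U, ∑ b ∈ U, ((if a = b then (circ (1 : K)).card else 0) + 1) := by
          refine Finset.sum_le_sum fun a _ => Finset.sum_le_sum fun b _ => ?_
          split_ifs with h
          · subst h
            simp only [and_self, card_refls_fixing]
            omega
          · simpa using card_refls_fixing_two h2 h
      _ = _ := by
          simp only [Finset.sum_add_distrib, Finset.sum_ite_eq]
          rw [Finset.sum_congr rfl fun s hs => if_pos hs]
          simp [sq]
  have a3 : ((refls K).card : ℝ) = (circ (1 : K)).card * Fintype.card K := by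
    exact_mod_cast refls_card h2
  have a1' : (∑ g ∈ refls K, ((fixd U g).card : ℝ)) = U.card * (circ (1 : K)).card := by
    exact_mod_cast a1
  have a2' : (∑ g ∈ refls K, ((fixd U g).card : ℝ) ^ 2)
      ≤ U.card * (circ (1 : K)).card + (U.card : ℝ) ^ 2 := by exact_mod_cast a2
  have a4 : ((circ (1 : K)).card : ℝ) ≤ 2 * Fintype.card K := by
    exact_mod_cast circ_card_le (1 : K)
  have a5 : (Fintype.card K : ℝ) ≤ (circ (1 : K)).card + 2 := by
    exact_mod_cast le_circ_card h2
  have a6 : (U.card : ℝ) ≤ (Fintype.card K : ℝ) ^ 2 := by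
    have := Finset.card_le_univ U
    rw [Fintype.card_prod, ← sq] at this
    exact_mod_cast this
  have hq : (0 : ℝ) < Fintype.card K := by exact_mod_cast Fintype.card_pos
  set q : ℝ := (Fintype.card K : ℝ) with hqd
  set N : ℝ := (U.card : ℝ) with hN
  set h : ℝ := ((circ (1 : K)).card : ℝ) with hh
  have hN0 : 0 ≤ N := Nat.cast_nonneg _
  calc _ = (∑ g ∈ refls K, ((fixd U g).card : ℝ) ^ 2)
          - 2 * (N / q) * (∑ g ∈ refls K, ((fixd U g).card : ℝ))
          + (refls K).card * (N / q) ^ 2 := by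
        rw [Finset.mul_sum, ← Finset.sum_sub_distrib, ← nsmul_eq_mul, ← Finset.sum_const,
          ← Finset.sum_add_distrib]
        exact Finset.sum_congr rfl fun s _ => by ring
    _ ≤ (N * h + N ^ 2) - 2 * (N / q) * (N * h) + (h * q) * (N / q) ^ 2 := by
        rw [a1', a3]; gcongr
    _ = N * h + N ^ 2 / q * (q - h) := by field_simp; ring
    _ ≤ N * (2 * q) + N ^ 2 / q * 2 := by
        gcongr; linarith
    _ ≤ N * (2 * q) + N * (2 * q) := by
        have : N ^ 2 / q ≤ N * q := by
          rw [div_le_iff₀ hq]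
          nlinarith
        linarith
    _ = _ := by ring

/-- Isosceles triangles are incidences between points and the axes of reflections. -/
lemma sum_trip_le (U : Finset (K × K)) :
    ∑ a ∈ U, (trip U a).card ≤ ∑ g ∈ refls K, (moved U g).card * (fixd U g).card := by
  have e1 : ∑ a ∈ U, (trip U a).card = (U.sigma fun a => trip U a).card :=
    (Finset.card_sigma _ _).symm
  have e2 : ∑ g ∈ refls K, (moved U g).card * (fixd U g).card
      = ((refls K).sigma fun g => moved U g ×ˢ fixd U g).card := by
    rw [Finset.card_sigma]; simp only [Finset.card_product]
  rw [e1, e2]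
  refine Finset.card_le_card_of_surjOn (fun z => ⟨z.2.2, (z.2.1, act z.1 z.2.1)⟩) ?_
  rintro ⟨a, b, c⟩ hz
  simp only [Finset.coe_sigma, Set.mem_sigma_iff, mem_coe, trip, mem_filter, mem_product] at hz
  obtain ⟨ha, ⟨hb, hc⟩, h, h0⟩ := hz
  obtain ⟨g, hg, rfl, hga⟩ := exists_refl h0 h
  refine ⟨⟨g, (b, a)⟩, ?_, rfl⟩
  simp only [Finset.coe_sigma, Set.mem_sigma_iff, mem_coe, moved, fixd, mem_filter, mem_product]
  exact ⟨hg, ⟨hb, hc, h0⟩, ha, hga⟩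

lemma sum_moved_le (h2 : (2 : K) ≠ 0) (U : Finset (K × K)) :
    ∑ g ∈ refls K, (moved U g).card ≤ U.card ^ 2 := by
  rw [← Finset.card_sigma, sq, ← Finset.card_product]
  refine Finset.card_le_card_of_injOn (fun z => (z.2, act z.1 z.2)) ?_ ?_
  · intro z hz
    simp only [Finset.coe_sigma, Set.mem_sigma_iff, mem_coe, moved, mem_filter] at hz
    simp only [coe_product, Set.mem_prod, mem_coe]
    exact ⟨hz.2.1, hz.2.2.1⟩
  · rintro ⟨g, b⟩ hz ⟨g', b'⟩ hz' h
    simp only [Finset.coe_sigma, Set.mem_sigma_iff, mem_coe, moved, mem_filter] at hz hz'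
    simp only [Prod.mk.injEq] at h
    obtain ⟨rfl, e⟩ := h
    have : g = g' := by
      refine refl_unique h2 hz.1 hz'.1 e fun hf => hz.2.2.2 ?_
      rw [hf]; simp [fdist]
    rw [this]

/-- The quadratic inequality closing the bootstrap. -/
lemma bootstrap {q N T R : ℝ} (hq : 1 ≤ q) (hNq : q ≤ N) (hU : q ^ 4 ≤ N ^ 3) (hT0 : 0 ≤ T)
    (hTR : T ≤ R + N ^ 3 / q)
    (hmain : R ^ 2 ≤ (4 * q * N ^ 2 + 3 / q * (N * (N ^ 2 + T))) * (4 * q * N)) :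
    T ≤ 16 * (N ^ 3 / q) := by
  have hq0 : 0 < q := by linarith
  have hN0 : 0 < N := by linarith
  have e : (4 * q * N ^ 2 + 3 / q * (N * (N ^ 2 + T))) * (4 * q * N)
      = 16 * (q ^ 2 * N ^ 3) + 12 * (N ^ 2 * N ^ 2) + 12 * (N ^ 2 * T) := by
    field_simp; ring
  rw [e] at hmain
  have hXpos : 0 < N ^ 3 / q := by positivity
  have hNX : N ^ 2 ≤ N ^ 3 / q := by
    rw [le_div_iff₀ hq0]
    nlinarith [sq_nonneg N]
  have hqX : q ^ 2 * N ^ 3 ≤ (N ^ 3 / q) ^ 2 := by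
    rw [div_pow, le_div_iff₀ (by positivity)]
    have : N ^ 3 * q ^ 4 ≤ N ^ 3 * N ^ 3 := by gcongr
    linarith
  generalize N ^ 3 / q = X at *
  by_contra hlt
  push Not at hlt
  have hR2 : (T - X) ^ 2 ≤ R ^ 2 := by
    apply pow_le_pow_left₀ <;> linarith
  have c1 : N ^ 2 * N ^ 2 ≤ X * X := by gcongr
  have c2 : N ^ 2 * T ≤ X * T := by gcongr
  have c3 : (T - X) ^ 2 ≤ 28 * X ^ 2 + 12 * (X * T) := by linarith
  nlinarith [mul_pos hXpos hXpos, mul_pos (sub_pos.2 hlt) hXpos, sq_nonneg (T - 16 * X)]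

/-- The number of isosceles triangles is `O(N³ / q)` once `N ≥ q^(4/3)`. The bisector energy is
bounded in terms of this number itself, so the estimate closes by a bootstrap. -/
lemma sum_tripS_le (h2 : (2 : K) ≠ 0) (U : Finset (K × K))
    (hU : (Fintype.card K : ℝ) ^ 4 ≤ (U.card : ℝ) ^ 3) :
    (∑ a ∈ U, ((tripS U a).card : ℝ)) ≤ 17 * ((U.card : ℝ) ^ 3 / Fintype.card K) := by
  have hq : (1 : ℝ) ≤ Fintype.card K := by exact_mod_cast Fintype.card_pos
  have b1 := sum_moved_sq h2 U
  have b2 := sum_fixd_var h2 U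
  have b3 : (∑ a ∈ U, ((trip U a).card : ℝ))
      ≤ ∑ g ∈ refls K, ((moved U g).card : ℝ) * (fixd U g).card := by
    exact_mod_cast sum_trip_le U
  have b4 : (∑ g ∈ refls K, ((moved U g).card : ℝ)) ≤ (U.card : ℝ) ^ 2 := by
    exact_mod_cast sum_moved_le h2 U
  have b5 : (∑ a ∈ U, ((tripS U a).card : ℝ))
      ≤ (U.card : ℝ) ^ 2 + ∑ a ∈ U, ((trip U a).card : ℝ) := by
    have : ∑ a ∈ U, (tripS U a).card ≤ U.card ^ 2 + ∑ a ∈ U, (trip U a).card := by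
      refine (Finset.sum_le_sum fun a _ => tripS_card_le h2 U a).trans ?_
      rw [Finset.sum_add_distrib, Finset.sum_const, smul_eq_mul, sq]
    exact_mod_cast this
  have cs := Finset.sum_mul_sq_le_sq_mul_sq (refls K) (fun g => ((moved U g).card : ℝ))
    (fun g => ((fixd U g).card : ℝ) - (U.card : ℝ) / Fintype.card K)
  have b6 : (∑ g ∈ refls K, ((moved U g).card : ℝ) * (fixd U g).card)
      = (∑ g ∈ refls K, ((moved U g).card : ℝ) * ((fixd U g).card - (U.card : ℝ) / Fintype.card K))
        + (∑ g ∈ refls K, ((moved U g).card : ℝ)) * ((U.card : ℝ) / Fintype.card K) := by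
    rw [Finset.sum_mul, ← Finset.sum_add_distrib]
    exact Finset.sum_congr rfl fun g _ => by ring
  rw [b6] at b3
  have hT0 : (0 : ℝ) ≤ ∑ a ∈ U, ((trip U a).card : ℝ) :=
    Finset.sum_nonneg fun _ _ => Nat.cast_nonneg _
  have hN0 : (0 : ℝ) ≤ U.card := Nat.cast_nonneg _
  have hV0 : 0 ≤ ∑ g ∈ refls K, (((fixd U g).card : ℝ) - (U.card : ℝ) / Fintype.card K) ^ 2 :=
    Finset.sum_nonneg fun _ _ => sq_nonneg _
  clear b6
  generalize (∑ g ∈ refls K, ((moved U g).card : ℝ)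
    * ((fixd U g).card - (U.card : ℝ) / Fintype.card K)) = R at *
  generalize (∑ g ∈ refls K, (((fixd U g).card : ℝ) - (U.card : ℝ) / Fintype.card K) ^ 2) = V at *
  generalize (∑ g ∈ refls K, ((moved U g).card : ℝ) ^ 2) = Q at *
  generalize (∑ g ∈ refls K, ((moved U g).card : ℝ)) = W at *
  generalize (∑ a ∈ U, ((tripS U a).card : ℝ)) = T' at *
  generalize (∑ a ∈ U, ((trip U a).card : ℝ)) = T at *
  generalize (Fintype.card K : ℝ) = q at *
  generalize (U.card : ℝ) = N at *
  have hNq : q ≤ N := by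
    by_contra hlt
    push Not at hlt
    have : N ^ 3 < q ^ 3 := by gcongr
    have : q ^ 3 * 1 ≤ q ^ 3 * q := by gcongr
    linarith [hU, show q ^ 3 * q = q ^ 4 by ring]
  have hTR : T ≤ R + N ^ 3 / q := by
    have : W * (N / q) ≤ N ^ 2 * (N / q) := by gcongr
    have e : N ^ 2 * (N / q) = N ^ 3 / q := by ring
    linarith
  have hmain : R ^ 2 ≤ (4 * q * N ^ 2 + 3 / q * (N * (N ^ 2 + T))) * (4 * q * N) := by
    have b5' : Q ≤ 4 * q * N ^ 2 + 3 / q * (N * (N ^ 2 + T)) := b1.trans (by gcongr)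
    exact cs.trans (mul_le_mul b5' b2 hV0 (by positivity))
  have hNX : N ^ 2 ≤ N ^ 3 / q := by
    rw [le_div_iff₀ (by linarith)]
    nlinarith [sq_nonneg N]
  have := bootstrap hq hNq hU hT0 hTR hmain
  linarith

/-- The distances, zero excluded, from `a` to the points of `A`. -/
noncomputable def dists (A : Finset (K × K)) (a : K × K) : Finset K :=
  (A.filter fun b => fdist a b ≠ 0).image (fdist a)

/-- Most points of a set `U` of size `≥ q^(4/3)` span a positive proportion of all distances to a
given large subset `A`. -/
lemma bad_card_le (h2 : (2 : K) ≠ 0) (U A : Finset (K × K)) (hAU : A ⊆ U)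
    (hU : (Fintype.card K : ℝ) ^ 4 ≤ (U.card : ℝ) ^ 3) (hA : (U.card : ℝ) ≤ 4 * A.card)
    (hUq : 16 * (Fintype.card K : ℝ) ≤ U.card) :
    ((U.filter fun a => ((dists A a).card : ℝ) < Fintype.card K / 5000).card : ℝ)
      ≤ U.card / 4 := by
  have hq : (0 : ℝ) < Fintype.card K := by exact_mod_cast Fintype.card_pos
  have hT := sum_tripS_le h2 U hU
  set B := U.filter fun a => ((dists A a).card : ℝ) < Fintype.card K / 5000 with hB
  have hpt : ∀ a ∈ B, (U.card : ℝ) ^ 2 / 64 ≤ (Fintype.card K : ℝ) / 5000 * (tripS U a).card := by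
    intro a ha
    have ha := (Finset.mem_filter.1 ha).2
    have hAa : (U.card : ℝ) / 8 ≤ ((A.filter fun b => fdist a b ≠ 0).card : ℝ) := by
      have h1 := card_fdist_le a 0 A
      have h3 := Finset.card_filter_add_card_filter_not (s := A) (fun b => fdist a b = 0)
      have h1' : ((A.filter fun b => fdist a b = 0).card : ℝ) ≤ 2 * Fintype.card K := by
        exact_mod_cast h1
      have h3' : ((A.filter fun b => fdist a b = 0).card : ℝ)
        + ((A.filter fun b => fdist a b ≠ 0).card : ℝ) = A.card := by exact_mod_cast h3
      linarith
    have h4 : ((A.filter fun b => fdist a b ≠ 0).card) ^ 2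
        ≤ (dists A a).card * (tripS U a).card := by
      have hm : ∀ b ∈ A.filter fun b => fdist a b ≠ 0, fdist a b ∈ dists A a :=
        fun b hb => Finset.mem_image_of_mem _ hb
      rw [Finset.card_eq_sum_card_fiberwise hm]
      refine sq_sum_le_card_mul_sum_sq.trans ?_
      refine Nat.mul_le_mul_left _ ?_
      rw [sum_sq_fiber _ _ _ hm]
      refine Finset.card_le_card (Finset.filter_subset_filter _ ?_)
      exact Finset.product_subset_product (Finset.filter_subset_filter _ hAU)
        (Finset.filter_subset_filter _ hAU)
    have h4' : ((A.filter fun b => fdist a b ≠ 0).card : ℝ) ^ 2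
        ≤ (dists A a).card * (tripS U a).card := by exact_mod_cast h4
    have h5 : ((U.card : ℝ) / 8) ^ 2 ≤ ((A.filter fun b => fdist a b ≠ 0).card : ℝ) ^ 2 := by
      gcongr
    calc (U.card : ℝ) ^ 2 / 64 = ((U.card : ℝ) / 8) ^ 2 := by ring
      _ ≤ ((dists A a).card : ℝ) * (tripS U a).card := h5.trans h4'
      _ ≤ _ := by gcongr
  have hsum : (B.card : ℝ) * ((U.card : ℝ) ^ 2 / 64)
      ≤ (Fintype.card K : ℝ) / 5000 * (17 * ((U.card : ℝ) ^ 3 / Fintype.card K)) := by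
    calc (B.card : ℝ) * ((U.card : ℝ) ^ 2 / 64) = ∑ a ∈ B, (U.card : ℝ) ^ 2 / 64 := by
          rw [Finset.sum_const, nsmul_eq_mul]
      _ ≤ ∑ a ∈ B, (Fintype.card K : ℝ) / 5000 * (tripS U a).card := Finset.sum_le_sum hpt
      _ ≤ ∑ a ∈ U, (Fintype.card K : ℝ) / 5000 * (tripS U a).card :=
          Finset.sum_le_sum_of_subset_of_nonneg (Finset.filter_subset _ _)
            fun _ _ _ => by positivity
      _ ≤ _ := by rw [← Finset.mul_sum]; gcongr
  have e : (Fintype.card K : ℝ) / 5000 * (17 * ((U.card : ℝ) ^ 3 / Fintype.card K))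
      = (U.card : ℝ) * (17 * 64 / 5000) * ((U.card : ℝ) ^ 2 / 64) := by field_simp
  rw [e] at hsum
  have hU0 : (0 : ℝ) < U.card := by linarith
  have := le_of_mul_le_mul_right hsum (by positivity)
  linarith

end Pinned

end TreeDist

/-! ### Embedding trees -/

namespace TreeDist

open Finset
open scoped Classical

/-- If every admissible point has `M` neighbours in `H` at distinct distances, the vertices of the
tree can be placed one after the other, moving away from the root, with `M` choices each; different
choices give different edge lengths. -/
lemma pow_le_treeCount {K : Type} [Field K] [Fintype K] {V : Type} [Fintype V]
    (G : SimpleGraph V) (v : V) (hG : G.IsTree) (x : K × K) (H A : Set (K × K)) (hHA : H ⊆ A)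
    (M : ℕ) (e : K × K → Fin M → K × K)
    (he : ∀ y, y = x ∨ y ∈ H → (∀ i, e y i ∈ H) ∧ Function.Injective fun i => fdist y (e y i)) :
    M ^ G.edgeSet.ncard ≤ treeCount G v x A := by
  have hpar : ∀ u, ∃ w, u ≠ v → G.Adj u w ∧ G.dist w v < G.dist u v := by
    intro u
    by_cases hu : u = v
    · exact ⟨u, fun h => absurd hu h⟩
    · obtain ⟨p, hp⟩ := hG.connected.exists_walk_length_eq_dist u v
      cases p with
      | nil => exact absurd rfl hu
      | @cons _ w _ h p' =>
        refine ⟨w, fun _ => ⟨h, ?_⟩⟩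
        rw [← hp, SimpleGraph.Walk.length_cons]
        exact Nat.lt_succ_of_le (SimpleGraph.dist_le p')
  choose par hpar using hpar
  have hφ : ∀ d : {u // u ≠ v} → Fin M, ∃ φ : V → K × K, φ v = x ∧
      ∀ u (h : u ≠ v), φ u = e (φ (par u)) (d ⟨u, h⟩) := by
    intro d
    let wf := (measure fun u : V => G.dist u v).wf
    let step : ∀ u, (∀ w, G.dist w v < G.dist u v → K × K) → K × K := fun u rec =>
      if h : u = v then x else e (rec (par u) (hpar u h).2) (d ⟨u, h⟩)
    refine ⟨wf.fix step, ?_, fun u h => ?_⟩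
    · rw [wf.fix_eq]; exact dif_pos rfl
    · rw [wf.fix_eq]; exact dif_neg h
  choose φ hφv hφe using hφ
  have hgood : ∀ d u, (φ d u = x ∨ φ d u ∈ H) ∧ (u ≠ v → φ d u ∈ H) := by
    intro d u
    induction hn : G.dist u v using Nat.strong_induction_on generalizing u with
    | _ n ih =>
      by_cases hu : u = v
      · subst hu; exact ⟨Or.inl (hφv d), fun h => absurd rfl h⟩
      · have h1 := (ih _ (hn ▸ (hpar u hu).2) (par u) rfl).1
        have h2 : φ d u ∈ H := by rw [hφe d u hu]; exact (he _ h1).1 _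
        exact ⟨Or.inr h2, fun _ => h2⟩
  let Ψ : ({u // u ≠ v} → Fin M) → (G.edgeSet → K) := fun d ε => edgeLengths (φ d) ε.1
  have hinj : Function.Injective Ψ := by
    intro d d' hdd
    have hedge : ∀ u w, G.Adj u w → fdist (φ d w) (φ d u) = fdist (φ d' w) (φ d' u) := by
      intro u w h
      exact congrFun hdd ⟨s(w, u), h.symm⟩
    have hstep : ∀ u (h : u ≠ v), φ d (par u) = φ d' (par u) → d ⟨u, h⟩ = d' ⟨u, h⟩ := by
      intro u h hp
      have h1 := hedge u (par u) (hpar u h).1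
      rw [hφe d u h, hφe d' u h, ← hp] at h1
      exact (he _ (hgood d (par u)).1).2 h1
    have heq : ∀ u, φ d u = φ d' u := by
      intro u
      induction hn : G.dist u v using Nat.strong_induction_on generalizing u with
      | _ n ih =>
        by_cases hu : u = v
        · rw [hu, hφv, hφv]
        · have hp := ih _ (hn ▸ (hpar u hu).2) (par u) rfl
          rw [hφe d u hu, hφe d' u hu, hp, hstep u hu hp]
    funext ⟨u, h⟩
    exact hstep u h (heq _)
  have hcard : G.edgeSet.ncard = Fintype.card {u // u ≠ v} := by
    have h1 := hG.card_edgeFinset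
    have h2 : G.edgeSet.ncard = G.edgeFinset.card := Set.ncard_eq_toFinset_card' _
    have h3 : Fintype.card {u // u ≠ v} = Fintype.card V - 1 := by
      rw [Fintype.card_subtype_compl, Fintype.card_subtype_eq]
    omega
  calc M ^ G.edgeSet.ncard = (Set.range Ψ).ncard := by
        rw [← Set.image_univ, Set.ncard_image_of_injective _ hinj, Set.ncard_univ,
          Nat.card_eq_fintype_card, Fintype.card_fun, Fintype.card_fin, hcard]
    _ ≤ treeCount G v x A := by
        refine Set.ncard_le_ncard ?_ (Set.toFinite _)
        rintro _ ⟨d, rfl⟩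
        exact ⟨φ d, hφv d, fun u hu => hHA ((hgood d u).2 hu), rfl⟩

lemma exists_enum {K : Type} [Field K] [Fintype K] (H : Finset (K × K)) (y : K × K) (M : ℕ)
    (h : M ≤ (dists H y).card) :
    ∃ f : Fin M → K × K, (∀ i, f i ∈ H) ∧ Function.Injective fun i => fdist y (f i) := by
  let g : Fin M → dists H y := fun i => (dists H y).equivFin.symm (Fin.castLE h i)
  have hg : Function.Injective g :=
    (dists H y).equivFin.symm.injective.comp (Fin.castLE_injective h)
  have : ∀ i, ∃ b ∈ H, fdist y b = g i := by
    intro i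
    obtain ⟨b, hb, hb'⟩ := Finset.mem_image.1 (g i).2
    exact ⟨b, (Finset.mem_filter.1 hb).1, hb'⟩
  choose f hf hf' using this
  refine ⟨f, hf, fun i j hij => hg (Subtype.ext ?_)⟩
  rw [← hf', ← hf']
  exact hij

lemma two_ne_zero_of_odd {K : Type} [Field K] [Fintype K] (h : Odd (Fintype.card K)) :
    (2 : K) ≠ 0 := by
  apply Ring.two_ne_zero
  intro hc
  have := FiniteField.even_card_iff_char_two.1 hc
  rw [Nat.odd_iff] at h
  omega

end TreeDist

/-- **Theorem 3.4 (two sets of large size over arbitrary finite fields).**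
Let `𝔽_q` be a finite field of odd order `q`, `T` a tree with `k ≥ 1` edges, `v` a vertex of
`T`, and `E, F ⊆ 𝔽_q²` with `|E| = |F| ≥ 4 · 2^(16k) · q^(4/3)`. Then there are a constant
`c = c(k) > 0` and a subset `E' ⊆ E` with `|E'| ≥ |E| / 2^(8k)` such that for every `x ∈ E'`
the number of distinct trees `(T', x)` isomorphic to `(T, v)` with all vertices other than `x`
in `F` is at least `c · q^k`. -/
theorem tree_two_sets_large_finite_field :
    ∀ k : ℕ, 1 ≤ k → ∃ c : ℝ, 0 < c ∧
      ∀ (Fq : Type) [Field Fq] [Fintype Fq], Odd (Fintype.card Fq) →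
        ∀ (V : Type) [Fintype V] (G : SimpleGraph V) (v : V),
          G.IsTree → G.edgeSet.ncard = k →
            ∀ E F : Finset (Fq × Fq),
              E.card = F.card →
              4 * 2 ^ (16 * k) * (Fintype.card Fq : ℝ) ^ ((4 : ℝ) / 3) ≤ (E.card : ℝ) →
                ∃ E' ⊆ E, (E.card : ℝ) / 2 ^ (8 * k) ≤ (E'.card : ℝ) ∧
                  ∀ x ∈ E', c * (Fintype.card Fq : ℝ) ^ k ≤ (treeCount G v x (↑F) : ℝ) := by
  classical
  intro k hk
  refine ⟨(1 / 5000) ^ k, by positivity, ?_⟩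
  intro Fq _ _ hodd V _ G v hG hGk E F hEF hE
  have h2 : (2 : Fq) ≠ 0 := TreeDist.two_ne_zero_of_odd hodd
  have hq : (1 : ℝ) ≤ Fintype.card Fq := by exact_mod_cast Fintype.card_pos
  have hpow : (2 : ℝ) ^ 16 ≤ 2 ^ (16 * k) := by gcongr <;> [norm_num; omega]
  have hr : (Fintype.card Fq : ℝ) ≤ (Fintype.card Fq : ℝ) ^ ((4 : ℝ) / 3) := by
    conv_lhs => rw [← Real.rpow_one (Fintype.card Fq : ℝ)]
    exact Real.rpow_le_rpow_of_exponent_le hq (by norm_num)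
  have hr3 : ((Fintype.card Fq : ℝ) ^ ((4 : ℝ) / 3)) ^ 3 = (Fintype.card Fq : ℝ) ^ 4 := by
    rw [← Real.rpow_natCast, ← Real.rpow_mul (by linarith)]
    norm_num
  have hr0 : (0 : ℝ) ≤ (Fintype.card Fq : ℝ) ^ ((4 : ℝ) / 3) := by positivity
  have hEr : 16 * (Fintype.card Fq : ℝ) ^ ((4 : ℝ) / 3) ≤ E.card := by
    refine le_trans ?_ hE
    gcongr
    linarith
  have hFE : (F.card : ℝ) = E.card := by rw [hEF]
  have hUE : (E.card : ℝ) ≤ (E ∪ F).card := by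
    exact_mod_cast Finset.card_le_card Finset.subset_union_left
  have hU2 : ((E ∪ F).card : ℝ) ≤ 2 * E.card := by
    have : (E ∪ F).card ≤ 2 * E.card := (Finset.card_union_le _ _).trans (by omega)
    exact_mod_cast this
  have hU3 : (Fintype.card Fq : ℝ) ^ 4 ≤ ((E ∪ F).card : ℝ) ^ 3 := by
    rw [← hr3]
    gcongr
    linarith
  have hU16 : 16 * (Fintype.card Fq : ℝ) ≤ (E ∪ F).card := by linarith
  -- at least half of `E`, and of `F`, spans many distances to a set of at least half the points
  have hlarge : ∀ A ⊆ F, (E.card : ℝ) ≤ 2 * A.card → ∀ B ⊆ E ∪ F, (B.card : ℝ) = E.card →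
      (E.card : ℝ) ≤ 2 * (B.filter fun a =>
        (Fintype.card Fq : ℝ) / 5000 ≤ (TreeDist.dists A a).card).card := by
    intro A hA hAc B hB hBc
    have h1 := TreeDist.bad_card_le h2 (E ∪ F) A (hA.trans Finset.subset_union_right) hU3
      (by linarith) hU16
    have h3 := Finset.card_le_card (Finset.filter_subset_filter
      (fun a => ((TreeDist.dists A a).card : ℝ) < Fintype.card Fq / 5000) hB)
    have h3' : ((B.filter fun a =>
        ((TreeDist.dists A a).card : ℝ) < Fintype.card Fq / 5000).card : ℝ) ≤ _ :=
      Nat.cast_le.2 h3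
    have h4 := Finset.card_filter_add_card_filter_not (s := B)
      (fun a => (Fintype.card Fq : ℝ) / 5000 ≤ (TreeDist.dists A a).card)
    simp only [not_le] at h4
    have h4' : ((B.filter fun a =>
        (Fintype.card Fq : ℝ) / 5000 ≤ (TreeDist.dists A a).card).card : ℝ) + (B.filter fun a =>
        ((TreeDist.dists A a).card : ℝ) < Fintype.card Fq / 5000).card = B.card := by
      exact_mod_cast h4
    have h5 : ((B.filter fun a =>
        ((TreeDist.dists A a).card : ℝ) < Fintype.card Fq / 5000).card : ℝ)
          ≤ ((E ∪ F).card : ℝ) / 4 := by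
      refine h3'.trans ?_
      convert h1
    linarith
  -- a smallest set stable under passing to its rich points is its own set of rich points
  obtain ⟨H, hHF, hHc, hHrich⟩ : ∃ H ⊆ F, (E.card : ℝ) ≤ 2 * H.card ∧
      ∀ y ∈ H, (Fintype.card Fq : ℝ) / 5000 ≤ (TreeDist.dists H y).card := by
    let Φ : Finset (Fq × Fq) → Finset (Fq × Fq) := fun A => F.filter fun a =>
      (Fintype.card Fq : ℝ) / 5000 ≤ (TreeDist.dists A a).card
    let 𝒜 := F.powerset.filter fun A => (E.card : ℝ) ≤ 2 * A.card ∧ Φ A ⊆ A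
    have hF𝒜 : F ∈ 𝒜 := by
      refine Finset.mem_filter.2 ⟨Finset.mem_powerset_self F, ?_, Finset.filter_subset _ _⟩
      rw [hFE]
      have : (0 : ℝ) ≤ E.card := Nat.cast_nonneg _
      linarith
    obtain ⟨H, hH, hmin⟩ := Finset.exists_min_image 𝒜 Finset.card ⟨F, hF𝒜⟩
    obtain ⟨hHF, hHc, hHΦ⟩ := Finset.mem_filter.1 hH
    have hHF := Finset.mem_powerset.1 hHF
    have hΦΦ : Φ (Φ H) ⊆ Φ H := by
      refine Finset.monotone_filter_right F fun a _ ha => ?_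
      refine le_trans ha ?_
      exact_mod_cast Finset.card_le_card
        (Finset.image_subset_image (Finset.filter_subset_filter _ hHΦ))
    have hΦ𝒜 : Φ H ∈ 𝒜 := Finset.mem_filter.2 ⟨Finset.mem_powerset.2 (Finset.filter_subset _ _),
      hlarge H hHF hHc F Finset.subset_union_right hFE, hΦΦ⟩
    have hEq : Φ H = H := Finset.eq_of_subset_of_card_le hHΦ (hmin _ hΦ𝒜)
    refine ⟨H, hHF, hHc, fun y hy => ?_⟩
    rw [← hEq] at hy
    exact (Finset.mem_filter.1 hy).2
  refine ⟨E.filter fun a => (Fintype.card Fq : ℝ) / 5000 ≤ (TreeDist.dists H a).card,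
    Finset.filter_subset _ _, ?_, ?_⟩
  · have h1 := hlarge H hHF hHc E Finset.subset_union_left rfl
    rw [div_le_iff₀ (by positivity)]
    have h3 : (2 : ℝ) ^ 1 ≤ 2 ^ (8 * k) := by gcongr <;> [norm_num; omega]
    have h4 : (0 : ℝ) ≤ ((E.filter fun a =>
      (Fintype.card Fq : ℝ) / 5000 ≤ (TreeDist.dists H a).card).card : ℝ) := Nat.cast_nonneg _
    nlinarith
  · intro x hx
    have hx := (Finset.mem_filter.1 hx).2
    have hen : ∀ y, ∃ f : Fin ⌈(Fintype.card Fq : ℝ) / 5000⌉₊ → Fq × Fq, y = x ∨ y ∈ H →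
        (∀ i, f i ∈ H) ∧ Function.Injective fun i => fdist y (f i) := by
      intro y
      by_cases hy : y = x ∨ y ∈ H
      · have : (Fintype.card Fq : ℝ) / 5000 ≤ (TreeDist.dists H y).card := by
          rcases hy with rfl | hy
          · exact hx
          · exact hHrich y hy
        obtain ⟨f, hf⟩ := TreeDist.exists_enum H y _ (Nat.ceil_le.2 this)
        exact ⟨f, fun _ => hf⟩
      · exact ⟨fun _ => 0, fun h => absurd h hy⟩
    choose e he using hen
    have hcount := TreeDist.pow_le_treeCount G v hG x (↑H) (↑F) (Finset.coe_subset.2 hHF) _ e he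
    rw [hGk] at hcount
    calc (1 / 5000 : ℝ) ^ k * (Fintype.card Fq : ℝ) ^ k
        = ((Fintype.card Fq : ℝ) / 5000) ^ k := by rw [← mul_pow]; congr 1; ring
      _ ≤ (⌈(Fintype.card Fq : ℝ) / 5000⌉₊ : ℝ) ^ k := by gcongr; exact Nat.le_ceil _
      _ ≤ _ := by exact_mod_cast hcount
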